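/- Lemma 7: run Algorithm 2 with the x-approval rule and k manipulators, and for each iteration i let p_t^a = F(p⃗ ∪ p⃗_M) after all k stages of iteration i, let u* be the member of U^i ranked lowest among U^i in p_t^a, and let d* be the member of D^i ranked highest among D^i in p_t^a. If for every iteration i (1 ≤ i ≤ ⌈m/2⌉) d* is ranked above u* in p_t^a, then no profile p⃗_m of k manipulative x-approval votes satisfies RC(F(p⃗ ∪ p⃗_m), p_o) = {p}; i.e., no manipulation by k manipulators makes p the negotiation result, and Algorithm 2 returns false. -/

import Mathlib

open Finset
open scoped Classical

variable {O : Type*} [Fintype O] [DecidableEq O]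

/-- A vote is a strict total order on the outcome set `O`, represented by its position
function: `p o` is the number of outcomes that `o` is preferred over, so the most
preferred outcome has position `m - 1` and the least preferred position `0`. -/
def IsVote (p : O → ℕ) : Prop :=
  Function.Injective p ∧ ∀ o : O, p o < Fintype.card O

/-- The total score of candidate `c` under the scoring vector `sc` (`sc j` is the number
of points awarded to the candidate at position `j`) for the profile `P`. -/
def score (sc : ℕ → ℤ) (P : List (O → ℕ)) (c : O) : ℤ :=
  (P.map fun q => sc (q c)).sum

/-- The positional scoring rule used as a social welfare function: candidates are ordered
by decreasing total score, ties being broken by the fixed strict tie-breaking order `tb`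
(a smaller `tb`-value means preferred by the tie-breaking order).  The output is again a
position function: the position of `c` is the number of candidates ranked below `c`. -/
def swf (sc : ℕ → ℤ) (tb : O → ℕ) (P : List (O → ℕ)) : O → ℕ := fun c =>
  (univ.filter fun c' =>
      score sc P c' < score sc P c ∨ (score sc P c' = score sc P c ∧ tb c < tb c')).card

/-- `topSet p j = A^j(p)`, the set of the `j` most preferred outcomes of `p`. -/
def topSet (p : O → ℕ) (j : ℕ) : Finset O :=
  univ.filter fun o => Fintype.card O - j ≤ p o

/-- The least `j ≥ 1` for which `A^j(p_t) ∩ A^j(p_o)` is nonempty, i.e. the iteration at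
which the Rational Compromise rule terminates. -/
noncomputable def rcIndex (pt po : O → ℕ) : ℕ :=
  sInf {j | 1 ≤ j ∧ (topSet pt j ∩ topSet po j).Nonempty}

/-- The Rational Compromise bargaining rule: `A^j(p_t) ∩ A^j(p_o)` for the least `j ≥ 1`
making this intersection nonempty. -/
noncomputable def RC (pt po : O → ℕ) : Finset O :=
  topSet pt (rcIndex pt po) ∩ topSet po (rcIndex pt po)

/-- The `n` most preferred members of `S` according to the ranking `r`. -/
def topWithin (r : O → ℕ) (S : Finset O) (n : ℕ) : Finset O :=
  S.filter fun o => (S.filter fun o' => r o < r o').card < n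

/-- The `n` least preferred members of `S` according to the ranking `r`. -/
def botWithin (r : O → ℕ) (S : Finset O) (n : ℕ) : Finset O :=
  S.filter fun o => (S.filter fun o' => r o' < r o).card < n

/-- The vote built by the algorithms from a current ranking `r` and a set `H`:
the members of `H` occupy the `|H|` highest positions in reverse order of `r`
(the `r`-least preferred member of `H` is placed highest), and the members of `O ∖ H`
occupy the remaining lowest positions in reverse order of `r` (the `r`-most preferred
of them is placed lowest). -/
def buildVote (r : O → ℕ) (H : Finset O) : O → ℕ := fun o =>
  if o ∈ H then Fintype.card O - H.card + (H.filter fun h => r o < r h).card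
  else (univ.filter fun c => c ∉ H ∧ r o < r c).card

/-- `H^i` for the constructive algorithms: the preferred outcome `p` together with the
`i - 1` most preferred outcomes of `p_t` that do not belong to `A^i(p_o)`. -/
def Hset (pt po : O → ℕ) (p : O) (i : ℕ) : Finset O :=
  insert p (topWithin pt ((univ \ topSet po i).erase p) (i - 1))

/-- `H^i` for the destructive algorithms: `p*`, the most preferred outcome of `p_t` other
than `e` that belongs to `A^i(p_o)`, together with the `i - 1` most preferred outcomes of
`p_t` other than `e` and `p*`. -/
def HsetD (pt po : O → ℕ) (e : O) (i : ℕ) : Finset O :=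
  topWithin pt ((topSet po i).erase e) 1 ∪
    topWithin pt ((univ.erase e) \ topWithin pt ((topSet po i).erase e) 1) (i - 1)

/-- The manipulator profile built by Algorithm 2 (for a fixed iteration whose set is `H`)
after the given number of stages: at each stage one more vote is appended, built from the
current social ranking `F(p⃗ ∪ p⃗_M)`. -/
def stageProfile (sc : ℕ → ℤ) (tb : O → ℕ) (P : List (O → ℕ)) (H : Finset O) :
    ℕ → List (O → ℕ)
  | 0 => []
  | n + 1 =>
      stageProfile sc tb P H n ++
        [buildVote (swf sc tb (P ++ stageProfile sc tb P H n)) H]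

/-- The vote constructed by Algorithm 2 at stage `ℓ` (1-indexed). -/
def stageVote (sc : ℕ → ℤ) (tb : O → ℕ) (P : List (O → ℕ)) (H : Finset O) (ℓ : ℕ) :
    O → ℕ :=
  buildVote (swf sc tb (P ++ stageProfile sc tb P H (ℓ - 1))) H

/-- The sets `U^i_s`:  `U^i_0` consists of the member of `H^i` with the lowest position in
`p_t`, and `U^i_{s+1}` adds every candidate ranked above some member of `U^i_s` by the
stage-`l` vote (`1 ≤ l < k`) but below some member of `U^i_s` by the stage-`(l+1)` vote. -/
noncomputable def Uaux (sc : ℕ → ℤ) (tb : O → ℕ) (P : List (O → ℕ)) (pt : O → ℕ)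
    (H : Finset O) (k : ℕ) : ℕ → Finset O
  | 0 => botWithin pt H 1
  | s + 1 =>
      Uaux sc tb P pt H k s ∪
        univ.filter fun u =>
          ∃ l, 1 ≤ l ∧ l < k ∧
            (∃ u' ∈ Uaux sc tb P pt H k s,
              stageVote sc tb P H l u' < stageVote sc tb P H l u) ∧
            (∃ u' ∈ Uaux sc tb P pt H k s,
              stageVote sc tb P H (l + 1) u < stageVote sc tb P H (l + 1) u')

/-- `U^i = ⋃ₛ U^i_s`. -/
noncomputable def Uset (sc : ℕ → ℤ) (tb : O → ℕ) (P : List (O → ℕ)) (pt : O → ℕ)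
    (H : Finset O) (k : ℕ) : Finset O :=
  univ.filter fun u => ∃ s, u ∈ Uaux sc tb P pt H k s

/-- The sets `D^i_s`: `D^i_0` consists of the member of `O ∖ H^i` with the highest position
in `p_t`, and `D^i_{s+1}` adds every candidate ranked below some member of `D^i_s` by the
stage-`l` vote (`1 ≤ l < k`) but above some member of `D^i_s` by the stage-`(l+1)` vote. -/
noncomputable def Daux (sc : ℕ → ℤ) (tb : O → ℕ) (P : List (O → ℕ)) (pt : O → ℕ)
    (H : Finset O) (k : ℕ) : ℕ → Finset O
  | 0 => topWithin pt (univ \ H) 1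
  | s + 1 =>
      Daux sc tb P pt H k s ∪
        univ.filter fun d =>
          ∃ l, 1 ≤ l ∧ l < k ∧
            (∃ d' ∈ Daux sc tb P pt H k s,
              stageVote sc tb P H l d < stageVote sc tb P H l d') ∧
            (∃ d' ∈ Daux sc tb P pt H k s,
              stageVote sc tb P H (l + 1) d' < stageVote sc tb P H (l + 1) d)

/-- `D^i = ⋃ₛ D^i_s`. -/
noncomputable def Dset (sc : ℕ → ℤ) (tb : O → ℕ) (P : List (O → ℕ)) (pt : O → ℕ)
    (H : Finset O) (k : ℕ) : Finset O :=
  univ.filter fun d => ∃ s, d ∈ Daux sc tb P pt H k s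

/-- The Borda scoring vector `(m-1, m-2, …, 1, 0)`: position `j` gets `j` points. -/
def bordaVec : ℕ → ℤ := fun j => (j : ℤ)

/-- The `x`-approval scoring vector for `m` candidates: the `x` highest positions get one
point, the rest get zero. -/
def approvalVec (m x : ℕ) : ℕ → ℤ := fun j => if m ≤ j + x then 1 else 0

/-- `sc` is a scoring vector for `m` candidates: `s_{m-1} ≥ … ≥ s_0 ≥ 0` and
`s_{m-1} > s_0`. -/
def IsScoringVector (m : ℕ) (sc : ℕ → ℤ) : Prop :=
  (∀ j, j + 1 < m → sc j ≤ sc (j + 1)) ∧ 0 ≤ sc 0 ∧ sc 0 < sc (m - 1)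

/-- Algorithm 1 (constructive single-voter manipulation) returns the vote `pa`:
the guard `pos(p, p_o) ≥ ⌈m/2⌉` holds and `pa` is the vote built at the first iteration
`i ∈ {1, …, ⌈m/2⌉}` at which the manipulation check succeeds. -/
def alg1Returns (sc : ℕ → ℤ) (tb : O → ℕ) (P : List (O → ℕ)) (po : O → ℕ) (p : O)
    (pa : O → ℕ) : Prop :=
  (Fintype.card O + 1) / 2 ≤ po p ∧
    ∃ i, 1 ≤ i ∧ i ≤ (Fintype.card O + 1) / 2 ∧
      pa = buildVote (swf sc tb P) (Hset (swf sc tb P) po p i) ∧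
      RC (swf sc tb (P ++ [pa])) po = {p} ∧
      ∀ j, 1 ≤ j → j < i →
        RC (swf sc tb (P ++ [buildVote (swf sc tb P) (Hset (swf sc tb P) po p j)])) po ≠
          {p}

/-- Algorithm 2 (constructive coalitional manipulation) run with `k` manipulators returns
the profile `PM`: the guard `pos(p, p_o) ≥ ⌈m/2⌉` holds and `PM` is the `k`-stage profile
built at the first iteration `i ∈ {1, …, ⌈m/2⌉}` at which the manipulation check succeeds. -/
def alg2Returns (sc : ℕ → ℤ) (tb : O → ℕ) (P : List (O → ℕ)) (po : O → ℕ) (p : O)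
    (k : ℕ) (PM : List (O → ℕ)) : Prop :=
  (Fintype.card O + 1) / 2 ≤ po p ∧
    ∃ i, 1 ≤ i ∧ i ≤ (Fintype.card O + 1) / 2 ∧
      PM = stageProfile sc tb P (Hset (swf sc tb P) po p i) k ∧
      RC (swf sc tb (P ++ PM)) po = {p} ∧
      ∀ j, 1 ≤ j → j < i →
        RC (swf sc tb (P ++ stageProfile sc tb P (Hset (swf sc tb P) po p j) k)) po ≠ {p}

/-- The modified Algorithm 1 (destructive single-voter manipulation) returns the vote
`pa`: the guard `pos(e, p_o) < ⌊m/2⌋` fails and `pa` is the vote built at the first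
iteration `i ∈ {1, …, ⌈m/2⌉}` at which `e` is excluded from the Rational Compromise. -/
def alg1ReturnsD (sc : ℕ → ℤ) (tb : O → ℕ) (P : List (O → ℕ)) (po : O → ℕ) (e : O)
    (pa : O → ℕ) : Prop :=
  Fintype.card O / 2 ≤ po e ∧
    ∃ i, 1 ≤ i ∧ i ≤ (Fintype.card O + 1) / 2 ∧
      pa = buildVote (swf sc tb P) (HsetD (swf sc tb P) po e i) ∧
      e ∉ RC (swf sc tb (P ++ [pa])) po ∧
      ∀ j, 1 ≤ j → j < i →
        e ∈ RC (swf sc tb (P ++ [buildVote (swf sc tb P) (HsetD (swf sc tb P) po e j)])) po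

/-- The modified Algorithm 2 (destructive coalitional manipulation) run with `k`
manipulators returns the profile `PM`: the guard `pos(e, p_o) < ⌊m/2⌋` fails and `PM` is
the `k`-stage profile built at the first iteration `i ∈ {1, …, ⌈m/2⌉}` at which `e` is
excluded from the Rational Compromise. -/
def alg2ReturnsD (sc : ℕ → ℤ) (tb : O → ℕ) (P : List (O → ℕ)) (po : O → ℕ) (e : O)
    (k : ℕ) (PM : List (O → ℕ)) : Prop :=
  Fintype.card O / 2 ≤ po e ∧
    ∃ i, 1 ≤ i ∧ i ≤ (Fintype.card O + 1) / 2 ∧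
      PM = stageProfile sc tb P (HsetD (swf sc tb P) po e i) k ∧
      e ∉ RC (swf sc tb (P ++ PM)) po ∧
      ∀ j, 1 ≤ j → j < i →
        e ∈ RC (swf sc tb (P ++ stageProfile sc tb P (HsetD (swf sc tb P) po e j) k)) po

/-- The set `U^i` arising from running the `k` stages of Algorithm 2 at iteration `i`. -/
noncomputable def UsetAlg (sc : ℕ → ℤ) (tb : O → ℕ) (P : List (O → ℕ)) (po : O → ℕ)
    (p : O) (i k : ℕ) : Finset O :=
  Uset sc tb P (swf sc tb P) (Hset (swf sc tb P) po p i) k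

/-- The set `D^i` arising from running the `k` stages of Algorithm 2 at iteration `i`. -/
noncomputable def DsetAlg (sc : ℕ → ℤ) (tb : O → ℕ) (P : List (O → ℕ)) (po : O → ℕ)
    (p : O) (i k : ℕ) : Finset O :=
  Dset sc tb P (swf sc tb P) (Hset (swf sc tb P) po p i) k

/-- The vote constructed at stage `ℓ` of iteration `i` of Algorithm 2. -/
def stageVoteAlg (sc : ℕ → ℤ) (tb : O → ℕ) (P : List (O → ℕ)) (po : O → ℕ)
    (p : O) (i ℓ : ℕ) : O → ℕ :=
  stageVote sc tb P (Hset (swf sc tb P) po p i) ℓ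

/-- `s_ℓ(c)`: the total score of candidate `c` in `F(p⃗ ∪ p⃗_M)` after stage `ℓ` of
iteration `i` of Algorithm 2. -/
def stageScoreAlg (sc : ℕ → ℤ) (tb : O → ℕ) (P : List (O → ℕ)) (po : O → ℕ)
    (p : O) (i ℓ : ℕ) (c : O) : ℤ :=
  score sc (P ++ stageProfile sc tb P (Hset (swf sc tb P) po p i) ℓ) c

/-- `F(p⃗ ∪ p⃗_M)` after stage `ℓ` of iteration `i` of Algorithm 2. -/
def stageSwfAlg (sc : ℕ → ℤ) (tb : O → ℕ) (P : List (O → ℕ)) (po : O → ℕ)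
    (p : O) (i ℓ : ℕ) : O → ℕ :=
  swf sc tb (P ++ stageProfile sc tb P (Hset (swf sc tb P) po p i) ℓ)

section Counting

/-- The `n` highest members of `S` number exactly `n`. -/
lemma card_topWithin {r : O → ℕ} (hr : Function.Injective r) (S : Finset O) {n : ℕ}
    (hn : n ≤ S.card) : (topWithin r S n).card = n := by
  set f : O → ℕ := fun o => (S.filter fun o' => r o < r o').card with hf
  have hlt : ∀ a ∈ S, ∀ b, r b < r a → f a < f b := by
    intro a ha b hab
    apply Finset.card_lt_card
    rw [Finset.ssubset_iff_of_subset]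
    · exact ⟨a, by simp [ha, hab], by simp⟩
    · intro c hc
      simp only [Finset.mem_filter] at hc ⊢
      exact ⟨hc.1, by omega⟩
  have hinj : Set.InjOn f S := by
    intro a ha b hb hab
    by_contra hne
    rcases lt_or_gt_of_ne (fun h => hne (hr h)) with h | h
    · have := hlt b hb a h; omega
    · have := hlt a ha b h; omega
  have himg : S.image f = range S.card := by
    apply Finset.eq_of_subset_of_card_le
    · intro j hj
      obtain ⟨a, ha, rfl⟩ := Finset.mem_image.1 hj
      rw [Finset.mem_range]
      apply Finset.card_lt_card
      rw [Finset.ssubset_iff_of_subset (Finset.filter_subset _ _)]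
      exact ⟨a, ha, by simp⟩
    · rw [Finset.card_image_of_injOn hinj, Finset.card_range]
  have himg' : (topWithin r S n).image f = range n := by
    ext j
    simp only [topWithin, Finset.mem_image, Finset.mem_filter, Finset.mem_range]
    constructor
    · rintro ⟨a, ⟨_, h⟩, rfl⟩
      exact h
    · intro hj
      have : j ∈ S.image f := by rw [himg, Finset.mem_range]; omega
      obtain ⟨a, ha, rfl⟩ := Finset.mem_image.1 this
      exact ⟨a, ⟨ha, hj⟩, rfl⟩
  have hsub : (topWithin r S n : Set O) ⊆ S := by
    intro a ha
    exact (Finset.mem_filter.1 ha).1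
  rw [← Finset.card_image_of_injOn (hinj.mono hsub), himg', Finset.card_range]

lemma card_topSet {q : O → ℕ} (hq : IsVote q) {j : ℕ} (hj : j ≤ Fintype.card O) :
    (topSet q j).card = j := by
  have himg : univ.image q = range (Fintype.card O) := by
    apply Finset.eq_of_subset_of_card_le
    · intro a ha
      obtain ⟨o, _, rfl⟩ := Finset.mem_image.1 ha
      exact Finset.mem_range.2 (hq.2 o)
    · rw [Finset.card_image_of_injective _ hq.1, Finset.card_range, Finset.card_univ]
  have himg' : (topSet q j).image q = Finset.Ico (Fintype.card O - j) (Fintype.card O) := by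
    ext a
    simp only [topSet, Finset.mem_image, Finset.mem_filter, Finset.mem_univ, true_and,
      Finset.mem_Ico]
    constructor
    · rintro ⟨o, h, rfl⟩
      exact ⟨h, hq.2 o⟩
    · rintro ⟨h1, h2⟩
      have : a ∈ univ.image q := by rw [himg]; exact Finset.mem_range.2 h2
      obtain ⟨o, _, rfl⟩ := Finset.mem_image.1 this
      exact ⟨o, h1, rfl⟩
  rw [← Finset.card_image_of_injective _ hq.1, himg', Nat.card_Ico]
  omega

end Counting

section SocialRanking

/-- `c'` is ranked below `c` by the scoring rule `sc` with tie-breaking `tb`. -/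
def RankedBelow (sc : ℕ → ℤ) (tb : O → ℕ) (P : List (O → ℕ)) (c' c : O) : Prop :=
  score sc P c' < score sc P c ∨ (score sc P c' = score sc P c ∧ tb c < tb c')

lemma swf_lt_of_rankedBelow {sc : ℕ → ℤ} {tb : O → ℕ} {P : List (O → ℕ)} {c' c : O}
    (h : RankedBelow sc tb P c' c) : swf sc tb P c' < swf sc tb P c := by
  apply Finset.card_lt_card
  unfold RankedBelow at h
  rw [Finset.ssubset_iff_of_subset]
  · exact ⟨c', by simpa using h, by simp⟩
  · intro a ha
    simp only [Finset.mem_filter, Finset.mem_univ, true_and] at ha ⊢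
    omega

lemma swf_lt_iff {sc : ℕ → ℤ} {tb : O → ℕ} (htb : Function.Injective tb)
    {P : List (O → ℕ)} {c' c : O} :
    swf sc tb P c' < swf sc tb P c ↔ RankedBelow sc tb P c' c := by
  refine ⟨fun h => ?_, swf_lt_of_rankedBelow⟩
  by_contra hn
  have hne : tb c' ≠ tb c := fun e => by
    have := htb e
    subst this
    exact lt_irrefl _ h
  have : RankedBelow sc tb P c c' := by
    unfold RankedBelow at hn ⊢
    omega
  exact absurd (swf_lt_of_rankedBelow this) (by omega)

lemma isVote_swf (sc : ℕ → ℤ) {tb : O → ℕ} (htb : Function.Injective tb)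
    (P : List (O → ℕ)) : IsVote (swf sc tb P) := by
  constructor
  · intro a b hab
    by_contra hne
    have htne : tb a ≠ tb b := fun e => hne (htb e)
    have h1 : ¬ RankedBelow sc tb P a b := fun h => by
      have := swf_lt_of_rankedBelow h
      omega
    have h2 : ¬ RankedBelow sc tb P b a := fun h => by
      have := swf_lt_of_rankedBelow h
      omega
    unfold RankedBelow at h1 h2
    omega
  · intro o
    apply Finset.card_lt_card
    rw [Finset.ssubset_iff_of_subset (Finset.subset_univ _)]
    exact ⟨o, Finset.mem_univ _, by simp⟩

lemma score_append (sc : ℕ → ℤ) (P Q : List (O → ℕ)) (c : O) :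
    score sc (P ++ Q) c = score sc P c + score sc Q c := by
  simp [score]

lemma score_approval_nonneg (m x : ℕ) (P : List (O → ℕ)) (c : O) :
    0 ≤ score (approvalVec m x) P c := by
  apply List.sum_nonneg
  intro a ha
  obtain ⟨q, _, rfl⟩ := List.mem_map.1 ha
  simp only [approvalVec]
  split_ifs <;> simp

lemma score_approval_le (m x : ℕ) (P : List (O → ℕ)) (c : O) :
    score (approvalVec m x) P c ≤ P.length := by
  induction P with
  | nil => simp [score]
  | cons q P ih =>
    simp only [score, List.map_cons, List.sum_cons, List.length_cons] at ih ⊢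
    have : approvalVec m x (q c) ≤ 1 := by
      simp only [approvalVec]
      split_ifs <;> simp
    push_cast
    linarith

lemma sum_score_approval {x : ℕ} (hx : x ≤ Fintype.card O) {P : List (O → ℕ)}
    (hP : ∀ q ∈ P, IsVote q) :
    ∑ c, score (approvalVec (Fintype.card O) x) P c = P.length * x := by
  induction P with
  | nil => simp [score]
  | cons q P ih =>
    have ih' := ih fun q hq => hP q (List.mem_cons_of_mem _ hq)
    have hq : ∑ c, approvalVec (Fintype.card O) x (q c) = x := by
      have := card_topSet (hP q List.mem_cons_self) hx
      simp only [approvalVec, Finset.sum_boole]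
      rw [topSet] at this
      simp only [Nat.sub_le_iff_le_add] at this
      exact_mod_cast this
    simp only [score, List.map_cons, List.sum_cons, List.length_cons] at ih' ⊢
    rw [Finset.sum_add_distrib, ih', hq]
    push_cast
    ring

end SocialRanking

section BuildVote

lemma le_buildVote_of_mem (r : O → ℕ) {H : Finset O} {o : O} (ho : o ∈ H) :
    Fintype.card O - H.card ≤ buildVote r H o := by
  simp [buildVote, ho]

lemma buildVote_lt_of_notMem (r : O → ℕ) {H : Finset O} {o : O} (ho : o ∉ H) :
    buildVote r H o < Fintype.card O - H.card := by
  simp only [buildVote, ho, if_false]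
  rw [← Finset.card_compl]
  apply Finset.card_lt_card
  rw [Finset.ssubset_iff_of_subset]
  · exact ⟨o, by simpa using ho, by simp⟩
  · intro c hc
    simp only [Finset.mem_filter, Finset.mem_compl] at hc ⊢
    exact hc.2.1

lemma buildVote_lt_of_lt {r : O → ℕ} {H : Finset O} {a b : O} (hab : a ∈ H ↔ b ∈ H)
    (h : r a < r b) : buildVote r H b < buildVote r H a := by
  by_cases ha : a ∈ H
  · have hb := hab.1 ha
    simp only [buildVote, ha, hb, if_true]
    apply Nat.add_lt_add_left
    apply Finset.card_lt_card
    rw [Finset.ssubset_iff_of_subset]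
    · exact ⟨b, by simp [hb, h], by simp⟩
    · intro c hc
      simp only [Finset.mem_filter] at hc ⊢
      exact ⟨hc.1, by omega⟩
  · have hb : b ∉ H := fun hb => ha (hab.2 hb)
    simp only [buildVote, ha, hb, if_false]
    apply Finset.card_lt_card
    rw [Finset.ssubset_iff_of_subset]
    · exact ⟨b, by simp [hb, h], by simp⟩
    · intro c hc
      simp only [Finset.mem_filter, Finset.mem_univ, true_and] at hc ⊢
      exact ⟨hc.1, by omega⟩

lemma isVote_buildVote {r : O → ℕ} (hr : Function.Injective r) (H : Finset O) :
    IsVote (buildVote r H) := by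
  have hcard := Finset.card_le_univ H
  constructor
  · intro a b hab
    by_contra hne
    have hm : a ∈ H ↔ b ∈ H := by
      by_cases ha : a ∈ H <;> by_cases hb : b ∈ H
      · simp [ha, hb]
      · have := le_buildVote_of_mem r ha
        have := buildVote_lt_of_notMem r hb
        omega
      · have := le_buildVote_of_mem r hb
        have := buildVote_lt_of_notMem r ha
        omega
      · simp [ha, hb]
    rcases lt_or_gt_of_ne (fun h => hne (hr h)) with h | h
    · have := buildVote_lt_of_lt hm h; omega
    · have := buildVote_lt_of_lt hm.symm h; omega
  · intro o
    by_cases ho : o ∈ H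
    · have : (H.filter fun h => r o < r h).card < H.card := by
        apply Finset.card_lt_card
        rw [Finset.ssubset_iff_of_subset (Finset.filter_subset _ _)]
        exact ⟨o, ho, by simp⟩
      simp only [buildVote, ho, if_true]
      omega
    · have := buildVote_lt_of_notMem r ho
      omega

lemma length_stageProfile (sc : ℕ → ℤ) (tb : O → ℕ) (P : List (O → ℕ)) (H : Finset O)
    (k : ℕ) : (stageProfile sc tb P H k).length = k := by
  induction k with
  | zero => rfl
  | succ k ih => simp [stageProfile, ih]

lemma isVote_of_mem_stageProfile (sc : ℕ → ℤ) {tb : O → ℕ} (htb : Function.Injective tb)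
    (P : List (O → ℕ)) (H : Finset O) (k : ℕ) :
    ∀ q ∈ stageProfile sc tb P H k, IsVote q := by
  induction k with
  | zero => simp [stageProfile]
  | succ k ih =>
    intro q hq
    simp only [stageProfile, List.mem_append, List.mem_singleton] at hq
    rcases hq with hq | rfl
    · exact ih q hq
    · exact isVote_buildVote (isVote_swf sc htb _).1 H

lemma score_stageProfile_succ (sc : ℕ → ℤ) (tb : O → ℕ) (P : List (O → ℕ)) (H : Finset O)
    (n : ℕ) (c : O) :
    score sc (P ++ stageProfile sc tb P H (n + 1)) c =
      score sc (P ++ stageProfile sc tb P H n) c +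
        sc (buildVote (swf sc tb (P ++ stageProfile sc tb P H n)) H c) := by
  simp [stageProfile, score, add_assoc]

lemma Uset_subset {sc : ℕ → ℤ} {tb : O → ℕ} {P : List (O → ℕ)} {pt : O → ℕ}
    {H : Finset O} {k : ℕ} : Uset sc tb P pt H k ⊆ H := by
  have key : ∀ s, Uaux sc tb P pt H k s ⊆ H := by
    intro s
    induction s with
    | zero => exact Finset.filter_subset _ _
    | succ s ih =>
      intro u hu
      simp only [Uaux, Finset.mem_union, Finset.mem_filter, Finset.mem_univ, true_and] at hu
      rcases hu with hu | ⟨l, _, _, ⟨u', hu', hlt⟩, _⟩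
      · exact ih hu
      · by_contra hn
        have h1 := buildVote_lt_of_notMem
          (swf sc tb (P ++ stageProfile sc tb P H (l - 1))) hn
        have h2 := le_buildVote_of_mem
          (swf sc tb (P ++ stageProfile sc tb P H (l - 1))) (ih hu')
        unfold stageVote at hlt
        omega
  intro u hu
  obtain ⟨s, hs⟩ := (Finset.mem_filter.1 hu).2
  exact key s hs

lemma notMem_of_mem_Dset {sc : ℕ → ℤ} {tb : O → ℕ} {P : List (O → ℕ)} {pt : O → ℕ}
    {H : Finset O} {k : ℕ} {d : O} (hd : d ∈ Dset sc tb P pt H k) : d ∉ H := by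
  have key : ∀ s, ∀ d ∈ Daux sc tb P pt H k s, d ∉ H := by
    intro s
    induction s with
    | zero =>
      intro d hd
      exact (Finset.mem_sdiff.1 (Finset.mem_filter.1 hd).1).2
    | succ s ih =>
      intro d hd
      simp only [Daux, Finset.mem_union, Finset.mem_filter, Finset.mem_univ, true_and] at hd
      rcases hd with hd | ⟨l, _, _, ⟨d', hd', hlt⟩, _⟩
      · exact ih d hd
      · intro hn
        have h1 := buildVote_lt_of_notMem
          (swf sc tb (P ++ stageProfile sc tb P H (l - 1))) (ih d' hd')
        have h2 := le_buildVote_of_mem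
          (swf sc tb (P ++ stageProfile sc tb P H (l - 1))) hn
        unfold stageVote at hlt
        omega
  obtain ⟨s, hs⟩ := (Finset.mem_filter.1 hd).2
  exact key s d hs

lemma Uset_nonempty {sc : ℕ → ℤ} {tb : O → ℕ} {P : List (O → ℕ)} {pt : O → ℕ}
    {H : Finset O} {k : ℕ} (hH : H.Nonempty) : (Uset sc tb P pt H k).Nonempty := by
  obtain ⟨u, hu, hmin⟩ := Finset.exists_min_image H pt hH
  refine ⟨u, Finset.mem_filter.2 ⟨Finset.mem_univ _, 0, ?_⟩⟩
  refine Finset.mem_filter.2 ⟨hu, ?_⟩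
  rw [Nat.lt_one_iff, Finset.card_eq_zero, Finset.filter_eq_empty_iff]
  intro o ho
  exact not_lt.2 (hmin o ho)

lemma Dset_nonempty {sc : ℕ → ℤ} {tb : O → ℕ} {P : List (O → ℕ)} {pt : O → ℕ}
    {H : Finset O} {k : ℕ} (hH : (univ \ H).Nonempty) : (Dset sc tb P pt H k).Nonempty := by
  obtain ⟨d, hd, hmax⟩ := Finset.exists_max_image (univ \ H) pt hH
  refine ⟨d, Finset.mem_filter.2 ⟨Finset.mem_univ _, 0, ?_⟩⟩
  refine Finset.mem_filter.2 ⟨hd, ?_⟩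
  rw [Nat.lt_one_iff, Finset.card_eq_zero, Finset.filter_eq_empty_iff]
  intro o ho
  exact not_lt.2 (hmax o ho)

end BuildVote

section Greedy

/-- Serving, in each of `k` rounds, `y` members of `S` with the largest remaining demands
satisfies all demands, provided no demand exceeds `k` and the total demand is at most
`k * y`. -/
lemma greedy_demands_met (S : Finset O) (y k : ℕ) (n : ℕ → O → ℤ) (Y : ℕ → Finset O)
    (hYS : ∀ l, Y l ⊆ S) (hYc : ∀ l, (Y l).card = y)
    (hYtop : ∀ l, ∀ a ∈ Y l, ∀ b ∈ S, b ∉ Y l → n l b ≤ n l a)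
    (hstep : ∀ l, ∀ a ∈ S, n (l + 1) a = n l a - if a ∈ Y l then 1 else 0)
    (h0 : ∀ a ∈ S, n 0 a ≤ k) (hsum : ∑ a ∈ S, max (n 0 a) 0 ≤ k * y) :
    ∀ a ∈ S, n k a ≤ 0 := by
  have key : ∀ l, l ≤ k → (∀ a ∈ S, n l a ≤ (k : ℤ) - l) ∧
      ∑ a ∈ S, max (n l a) 0 ≤ ((k : ℤ) - l) * y := by
    intro l
    induction l with
    | zero =>
      intro _
      simpa using ⟨h0, hsum⟩
    | succ l ih =>
      intro hl
      obtain ⟨hb, hs⟩ := ih (by omega)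
      push_cast
      have hsumY : ∀ c : ℤ, ∑ a ∈ S, (if a ∈ Y l then c else 0) = c * y := by
        intro c
        rw [← Finset.sum_filter, Finset.filter_mem_eq_inter,
          Finset.inter_eq_right.2 (hYS l), Finset.sum_const, hYc, nsmul_eq_mul, mul_comm]
      by_cases hpos : ∃ b ∈ S, b ∉ Y l ∧ 0 < n l b
      · obtain ⟨b, hbS, hbY, hbpos⟩ := hpos
        have hYpos : ∀ a ∈ Y l, 1 ≤ n l a := fun a ha => by
          have := hYtop l a ha b hbS hbY
          omega
        constructor
        · intro a ha
          rw [hstep l a ha]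
          have hba := hb a ha
          split_ifs with haY
          · omega
          · by_contra hcon
            have hna : n l a = (k : ℤ) - l := by omega
            have hle : ∀ c ∈ S, (if c ∈ Y l then (k : ℤ) - l else 0) +
                (if c = a then (k : ℤ) - l else 0) ≤ max (n l c) 0 := by
              intro c hc
              by_cases hcY : c ∈ Y l
              · have hca : c ≠ a := fun h => haY (h ▸ hcY)
                have := hYtop l c hcY a ha haY
                simp only [hcY, hca, if_true, if_false]
                omega
              · by_cases hca : c = a
                · subst hca
                  simp only [haY, if_true, if_false]
                  omega
                · simp [hcY, hca]
            have h1 := Finset.sum_le_sum hle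
            rw [Finset.sum_add_distrib, hsumY, Finset.sum_ite_eq' S a, if_pos ha] at h1
            omega
        · have heq : ∑ a ∈ S, max (n (l + 1) a) 0 =
              ∑ a ∈ S, (max (n l a) 0 - if a ∈ Y l then 1 else 0) := by
            apply Finset.sum_congr rfl
            intro a ha
            rw [hstep l a ha]
            split_ifs with haY
            · have := hYpos a haY
              omega
            · simp
          rw [heq, Finset.sum_sub_distrib, hsumY]
          linarith
      · push Not at hpos
        constructor
        · intro a ha
          rw [hstep l a ha]
          have hba := hb a ha
          split_ifs with haY
          · omega
          · have := hpos a ha haY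
            omega
        · rw [← hsumY]
          apply Finset.sum_le_sum
          intro a ha
          rw [hstep l a ha]
          have hba := hb a ha
          split_ifs with haY
          · omega
          · have := hpos a ha haY
            omega
  intro a ha
  have := (key k le_rfl).1 a ha
  omega

/-- If some `k` votes place `H` above its complement, then so do the `k` stages of the
algorithm. -/
lemma stageProfile_separates {x k : ℕ} (hx : x ≤ Fintype.card O) {tb : O → ℕ}
    (htb : Function.Injective tb) (P : List (O → ℕ)) (H : Finset O) {PM : List (O → ℕ)}
    (hlen : PM.length = k) (hPM : ∀ q ∈ PM, IsVote q)
    (hsep : ∀ h ∈ H, ∀ d ∉ H,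
      RankedBelow (approvalVec (Fintype.card O) x) tb (P ++ PM) d h) :
    ∀ h ∈ H, ∀ d ∉ H, RankedBelow (approvalVec (Fintype.card O) x) tb
      (P ++ stageProfile (approvalVec (Fintype.card O) x) tb P H k) d h := by
  intro h hh d hd
  set sc := approvalVec (Fintype.card O) x with hsc
  set S : ℕ → O → ℤ := fun l => score sc (P ++ stageProfile sc tb P H l) with hS
  set r : ℕ → O → ℕ := fun l => swf sc tb (P ++ stageProfile sc tb P H l) with hr
  have hrinj : ∀ l, Function.Injective (r l) := fun l => (isVote_swf sc htb _).1
  have hHc := Finset.card_le_univ H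
  have hS0 : ∀ c, S 0 c = score sc P c := fun c => by simp [hS, stageProfile]
  have hSsucc : ∀ l c, S (l + 1) c = S l c + sc (buildVote (r l) H c) :=
    fun l c => score_stageProfile_succ sc tb P H l c
  have hrle : ∀ l a b, r l a ≤ r l b → ¬ RankedBelow sc tb
      (P ++ stageProfile sc tb P H l) b a := by
    intro l a b hab hcon
    exact absurd (swf_lt_of_rankedBelow hcon) (not_lt.2 hab)
  have habove : ∀ (l : ℕ) (T : Finset O) (a b : O),
      (T.filter fun o => r l b < r l o).card < (T.filter fun o => r l a < r l o).card →
      r l a ≤ r l b := by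
    intro l T a b hlt
    by_contra hcon
    apply absurd (Finset.card_le_card _) (not_le.2 hlt)
    intro o ho
    simp only [Finset.mem_filter] at ho ⊢
    exact ⟨ho.1, by omega⟩
  have hsep' : ∀ h ∈ H, ∀ d ∉ H,
      score sc P d + score sc PM d < score sc P h + score sc PM h ∨
        (score sc P d + score sc PM d = score sc P h + score sc PM h ∧ tb h < tb d) := by
    intro h hh d hd
    simpa [RankedBelow, score_append] using hsep h hh d hd
  have hnn : ∀ c, 0 ≤ score sc PM c := score_approval_nonneg _ _ PM
  have hub : ∀ c, score sc PM c ≤ k := fun c => hlen ▸ score_approval_le _ _ PM c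
  have htot : ∑ c, score sc PM c = k * x := hlen ▸ sum_score_approval hx hPM
  rcases le_total x H.card with hxH | hxH
  · -- all approvals go to `H`
    set Y : ℕ → Finset O := fun l => H \ topWithin (r l) H (H.card - x) with hY
    have hmemY : ∀ l, ∀ a ∈ H, a ∈ Y l ↔
        H.card - x ≤ (H.filter fun o => r l a < r l o).card := by
      intro l a ha
      simp [hY, topWithin, ha]
    have hscH : ∀ l, ∀ a ∈ H, sc (buildVote (r l) H a) = if a ∈ Y l then 1 else 0 := by
      intro l a ha
      simp only [hsc, approvalVec, buildVote, ha, if_true, hmemY l a ha]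
      congr 1
      apply propext
      omega
    have hscD : ∀ l, ∀ a ∉ H, sc (buildVote (r l) H a) = 0 := by
      intro l a ha
      have := buildVote_lt_of_notMem (r l) ha
      simp only [hsc, approvalVec]
      rw [if_neg (by omega)]
    have hSd : ∀ l, S l d = score sc P d := by
      intro l
      induction l with
      | zero => exact hS0 d
      | succ l ih => rw [hSsucc, ih, hscD l d hd, add_zero]
    have hdem := greedy_demands_met H x k
      (fun l a => score sc P d - S l a + if tb d < tb a then 1 else 0) Y
      (fun l => Finset.sdiff_subset)
      (fun l => by
        have hsub : topWithin (r l) H (H.card - x) ⊆ H := Finset.filter_subset _ _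
        rw [hY, Finset.card_sdiff_of_subset hsub, card_topWithin (hrinj l) H (by omega)]
        omega)
      (by
        intro l a ha b hb hbY
        have haH : a ∈ H := (Finset.mem_sdiff.1 ha).1
        rw [hmemY l a haH] at ha
        rw [hmemY l b hb] at hbY
        have hnb := hrle l a b (habove l H a b (by omega))
        unfold RankedBelow at hnb
        simp only [hS]
        split_ifs <;> omega)
      (by
        intro l a ha
        rw [hSsucc, hscH l a ha]
        ring)
      (by
        intro a ha
        have h1 := hsep' a ha d hd
        have h2 := hnn d
        have h3 := hub a
        simp only [hS0]
        split_ifs <;> omega)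
      (by
        rw [← htot]
        refine le_trans (Finset.sum_le_sum fun a ha => ?_)
          (Finset.sum_le_sum_of_subset_of_nonneg (Finset.subset_univ H)
            fun c _ _ => hnn c)
        have h1 := hsep' a ha d hd
        have h2 := hnn d
        have h3 := hnn a
        simp only [hS0]
        split_ifs <;> omega) h hh
    have hne : tb d ≠ tb h := fun e => hd (htb e ▸ hh)
    have hSdk := hSd k
    simp only [hS] at hdem hSdk
    unfold RankedBelow
    split_ifs at hdem <;> omega
  · -- all of `H` is approved, and the vetoes go to the complement
    set Y : ℕ → Finset O := fun l => topWithin (r l) Hᶜ (Fintype.card O - x) with hY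
    have hmemY : ∀ l, ∀ a ∉ H, a ∈ Y l ↔
        (Hᶜ.filter fun o => r l a < r l o).card < Fintype.card O - x := by
      intro l a ha
      simp [hY, topWithin, ha]
    have hscH : ∀ l, ∀ a ∈ H, sc (buildVote (r l) H a) = 1 := by
      intro l a ha
      have := le_buildVote_of_mem (r l) ha
      simp only [hsc, approvalVec]
      rw [if_pos (by omega)]
    have hscD : ∀ l, ∀ a ∉ H, sc (buildVote (r l) H a) = 1 - if a ∈ Y l then 1 else 0 := by
      intro l a ha
      have heq : (univ.filter fun c => c ∉ H ∧ r l a < r l c) =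
          Hᶜ.filter fun o => r l a < r l o := by
        ext c
        simp
      simp only [hsc, approvalVec, buildVote, ha, if_false, hmemY l a ha, heq]
      split_ifs <;> omega
    have hSh : ∀ l : ℕ, S l h = score sc P h + l := by
      intro l
      induction l with
      | zero => simp [hS0 h]
      | succ l ih =>
        rw [hSsucc, ih, hscH l h hh]
        push_cast
        ring
    have hdem := greedy_demands_met Hᶜ (Fintype.card O - x) k
      (fun l a => S l a - l - score sc P h + if tb a < tb h then 1 else 0) Y
      (fun l => Finset.filter_subset _ _)
      (fun l => card_topWithin (hrinj l) _ (by rw [Finset.card_compl]; omega))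
      (by
        intro l a ha b hb hbY
        have haH : a ∉ H := Finset.mem_compl.1 (Finset.filter_subset _ _ ha)
        rw [hmemY l a haH] at ha
        rw [hmemY l b (Finset.mem_compl.1 hb)] at hbY
        have hnb := hrle l b a (habove l Hᶜ b a (by omega))
        unfold RankedBelow at hnb
        simp only [hS]
        split_ifs <;> omega)
      (by
        intro l a ha
        rw [hSsucc, hscD l a (Finset.mem_compl.1 ha)]
        push_cast
        ring)
      (by
        intro a ha
        have h1 := hsep' h hh a (Finset.mem_compl.1 ha)
        have h2 := hnn a
        have h3 := hub h
        simp only [hS0]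
        split_ifs <;> omega)
      (by
        have htot' : ∑ c, ((k : ℤ) - score sc PM c) = k * (Fintype.card O - x : ℕ) := by
          rw [Finset.sum_sub_distrib, htot, Finset.sum_const, Finset.card_univ, nsmul_eq_mul,
            Nat.cast_sub hx]
          ring
        rw [← htot']
        refine le_trans (Finset.sum_le_sum fun a ha => ?_)
          (Finset.sum_le_sum_of_subset_of_nonneg (Finset.subset_univ Hᶜ)
            fun c _ _ => sub_nonneg.2 (hub c))
        have h1 := hsep' h hh a (Finset.mem_compl.1 ha)
        have h2 := hub h
        have h3 := hub a
        simp only [hS0]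
        split_ifs <;> omega) d (Finset.mem_compl.2 hd)
    have hne : tb d ≠ tb h := fun e => hd (htb e ▸ hh)
    have hShk := hSh k
    simp only [hS] at hdem hShk
    unfold RankedBelow
    split_ifs at hdem <;> omega

end Greedy

section Exchange

lemma score_map_comp (sc : ℕ → ℤ) (PM : List (O → ℕ)) (σ : O → O) (c : O) :
    score sc (PM.map fun q => q ∘ σ) c = score sc PM (σ c) := by
  simp [score, Function.comp_def]

/-- If `k` votes can place `T` on top, they can also place on top any set `H` of the same
size whose members outside `T` are honestly ranked above the members of `T` outside `H`. -/
lemma exists_separating_of_exchange {sc : ℕ → ℤ} {tb : O → ℕ} {P : List (O → ℕ)}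
    {H : Finset O} {k : ℕ} : ∀ (n : ℕ) (T : Finset O), (H \ T).card = n → T.card = H.card →
      (∀ h ∈ H \ T, ∀ t ∈ T \ H, RankedBelow sc tb P t h) →
      (∃ PM : List (O → ℕ), PM.length = k ∧ (∀ q ∈ PM, IsVote q) ∧
        ∀ t ∈ T, ∀ d ∉ T, RankedBelow sc tb (P ++ PM) d t) →
      ∃ PM : List (O → ℕ), PM.length = k ∧ (∀ q ∈ PM, IsVote q) ∧
        ∀ t ∈ H, ∀ d ∉ H, RankedBelow sc tb (P ++ PM) d t := by
  intro n
  induction n with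
  | zero =>
    intro T hn hc _ hPM
    have hsub : H ⊆ T := by
      rwa [Finset.card_eq_zero, Finset.sdiff_eq_empty_iff_subset] at hn
    rwa [Finset.eq_of_subset_of_card_le hsub hc.le]
  | succ n ih =>
    rintro T hn hc hex ⟨PM, hlen, hvotes, hsep⟩
    obtain ⟨h, hh⟩ : (H \ T).Nonempty := by
      rw [← Finset.card_pos]; omega
    obtain ⟨t, ht⟩ : (T \ H).Nonempty := by
      rw [← Finset.card_pos, Finset.card_sdiff_comm hc]; omega
    have hht := hex h hh t ht
    obtain ⟨hhH, hhT⟩ := Finset.mem_sdiff.1 hh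
    obtain ⟨htT, htH⟩ := Finset.mem_sdiff.1 ht
    have hne : h ≠ t := fun e => hhT (e ▸ htT)
    have hHT : H \ insert h (T.erase t) = (H \ T).erase h := by
      ext o
      simp only [Finset.mem_sdiff, Finset.mem_insert, Finset.mem_erase]
      have : o ∈ H → o ≠ t := fun ho e => htH (e ▸ ho)
      tauto
    apply ih (insert h (T.erase t))
    · rw [hHT, Finset.card_erase_of_mem hh]
      omega
    · rw [Finset.card_insert_of_notMem (by simp [hhT]), Finset.card_erase_of_mem htT, ← hc]
      have := Finset.card_pos.2 ⟨t, htT⟩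
      omega
    · intro a ha b hb
      rw [hHT] at ha
      apply hex a (Finset.mem_of_mem_erase ha) b
      simp only [Finset.mem_sdiff, Finset.mem_insert, Finset.mem_erase] at hb ⊢
      have : b = h → b ∈ H := fun e => e ▸ hhH
      tauto
    · refine ⟨PM.map fun q => q ∘ Equiv.swap h t, by simpa using hlen, ?_, ?_⟩
      · intro q hq
        obtain ⟨q', hq', rfl⟩ := List.mem_map.1 hq
        exact ⟨(hvotes q' hq').1.comp (Equiv.injective _), fun o => (hvotes q' hq').2 _⟩
      · intro a ha d hd
        simp only [Finset.mem_insert, Finset.mem_erase, not_or, not_and] at ha hd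
        have h0 := hsep t htT h hhT
        unfold RankedBelow at h0 hht ⊢
        simp only [score_append, score_map_comp] at h0 ⊢
        have hA : a = h ∨ (a ∈ T ∧ Equiv.swap h t a = a) := by
          rcases ha with ha | ⟨hat, haT⟩
          · exact Or.inl ha
          · exact Or.inr ⟨haT, Equiv.swap_apply_of_ne_of_ne (fun e => hhT (e ▸ haT)) hat⟩
        have hD : d = t ∨ (d ∉ T ∧ Equiv.swap h t d = d) := by
          by_cases hdt : d = t
          · exact Or.inl hdt
          · exact Or.inr ⟨hd.2 hdt, Equiv.swap_apply_of_ne_of_ne hd.1 hdt⟩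
        have hsep' : ∀ t ∈ T, ∀ d ∉ T,
            score sc P d + score sc PM d < score sc P t + score sc PM t ∨
              (score sc P d + score sc PM d = score sc P t + score sc PM t ∧
                tb t < tb d) := by
          intro t ht d hd
          simpa [RankedBelow, score_append] using hsep t ht d hd
        rcases hA with rfl | ⟨haT, hae⟩ <;> rcases hD with rfl | ⟨hdT, hde⟩
        · rw [Equiv.swap_apply_left, Equiv.swap_apply_right]
          omega
        · have := hsep' t htT d hdT
          rw [Equiv.swap_apply_left, hde]
          omega
        · have := hsep' a haT h hhT
          rw [Equiv.swap_apply_right, hae]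
          omega
        · rw [hae, hde]
          exact hsep' a haT d hdT

end Exchange

section RationalCompromise

/-- A singleton Rational Compromise is reached within the first `⌈m/2⌉` iterations. -/
lemma rcIndex_bounds {pt po : O → ℕ} (hpt : IsVote pt) (hpo : IsVote po) {p : O}
    (hRC : RC pt po = {p}) :
    1 ≤ rcIndex pt po ∧ rcIndex pt po ≤ (Fintype.card O + 1) / 2 := by
  have hmem : Fintype.card O ∈ {j | 1 ≤ j ∧ (topSet pt j ∩ topSet po j).Nonempty} :=
    ⟨Fintype.card_pos_iff.2 ⟨p⟩, p, by simp [topSet]⟩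
  have h1 := (Nat.sInf_mem ⟨_, hmem⟩).1
  have hm : rcIndex pt po ≤ Fintype.card O := Nat.sInf_le hmem
  refine ⟨h1, ?_⟩
  have hc := Finset.card_union_add_card_inter (topSet pt (rcIndex pt po))
    (topSet po (rcIndex pt po))
  have hR : topSet pt (rcIndex pt po) ∩ topSet po (rcIndex pt po) = {p} := hRC
  rw [hR, card_topSet hpt hm, card_topSet hpo hm, Finset.card_singleton] at hc
  have := Finset.card_le_univ (topSet pt (rcIndex pt po) ∪ topSet po (rcIndex pt po))
  omega

lemma card_Hset {pt po : O → ℕ} (hpt : Function.Injective pt) (hpo : IsVote po) {p : O}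
    {i : ℕ} (hi1 : 1 ≤ i) (hi2 : i ≤ (Fintype.card O + 1) / 2) (hp : p ∈ topSet po i) :
    (Hset pt po p i).card = i := by
  have hS : (univ \ topSet po i).erase p = univ \ topSet po i :=
    Finset.erase_eq_of_notMem (by simp [hp])
  have hc : (univ \ topSet po i).card = Fintype.card O - i := by
    rw [Finset.card_univ_sdiff, card_topSet hpo (by omega)]
  rw [Hset, hS, Finset.card_insert_of_notMem, card_topWithin hpt _ (by omega)]
  · omega
  · simp [topWithin, hp]

/-- Members of `H^i` are honestly ranked above the other outcomes outside `A^i(p_o)`. -/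
lemma lt_of_mem_Hset {pt po : O → ℕ} {p h t : O} {i : ℕ} (hh : h ∈ Hset pt po p i)
    (hhp : h ≠ p) (ht : t ∉ Hset pt po p i) (htop : t ∉ topSet po i) : pt t < pt h := by
  simp only [Hset, Finset.mem_insert, hhp, false_or, not_or] at hh ht
  by_contra hcon
  refine ht.2 (Finset.mem_filter.2 ⟨by simp [ht.1, htop], ?_⟩)
  refine lt_of_le_of_lt (Finset.card_le_card ?_) (Finset.mem_filter.1 hh).2
  intro o ho
  simp only [Finset.mem_filter] at ho ⊢
  exact ⟨ho.1, by omega⟩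

end RationalCompromise

/-- Lemma 7: run Algorithm 2 with the x-approval rule and `k` manipulators;
let `u*` be the member of `U^i` ranked lowest among `U^i` and `d*` the member of `D^i`
ranked highest among `D^i` in `p_t^a = F(p⃗ ∪ p⃗_M)`.  If at every iteration
`i ∈ {1, …, ⌈m/2⌉}` the outcome `d*` is ranked above `u*` in `p_t^a`, then no profile of
`k` manipulative votes makes `p` the unique Rational Compromise outcome, and Algorithm 2
returns false. -/
theorem lemma7_failure_condition
    (x k : ℕ) (hx1 : 1 ≤ x) (hx2 : x < Fintype.card O)
    (tb : O → ℕ) (P : List (O → ℕ)) (po : O → ℕ) (p : O)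
    (htb : Function.Injective tb) (hP : ∀ q ∈ P, IsVote q) (hpo : IsVote po)
    (hfail : ∀ i, 1 ≤ i → i ≤ (Fintype.card O + 1) / 2 →
      ∀ ustar ∈ UsetAlg (approvalVec (Fintype.card O) x) tb P po p i k,
        ∀ dstar ∈ DsetAlg (approvalVec (Fintype.card O) x) tb P po p i k,
          (∀ u ∈ UsetAlg (approvalVec (Fintype.card O) x) tb P po p i k, u ≠ ustar →
            stageSwfAlg (approvalVec (Fintype.card O) x) tb P po p i k ustar <
              stageSwfAlg (approvalVec (Fintype.card O) x) tb P po p i k u) →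
          (∀ d ∈ DsetAlg (approvalVec (Fintype.card O) x) tb P po p i k, d ≠ dstar →
            stageSwfAlg (approvalVec (Fintype.card O) x) tb P po p i k d <
              stageSwfAlg (approvalVec (Fintype.card O) x) tb P po p i k dstar) →
          stageSwfAlg (approvalVec (Fintype.card O) x) tb P po p i k ustar <
            stageSwfAlg (approvalVec (Fintype.card O) x) tb P po p i k dstar) :
    (¬ ∃ PM : List (O → ℕ), PM.length = k ∧ (∀ q ∈ PM, IsVote q) ∧
        RC (swf (approvalVec (Fintype.card O) x) tb (P ++ PM)) po = {p}) ∧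
      ∀ i, 1 ≤ i → i ≤ (Fintype.card O + 1) / 2 →
        RC (stageSwfAlg (approvalVec (Fintype.card O) x) tb P po p i k) po ≠ {p} := by
  have main : ¬ ∃ PM : List (O → ℕ), PM.length = k ∧ (∀ q ∈ PM, IsVote q) ∧
      RC (swf (approvalVec (Fintype.card O) x) tb (P ++ PM)) po = {p} := by
    rintro ⟨PM, hlen, hvotes, hRC⟩
    set sc := approvalVec (Fintype.card O) x with hsc
    have hptm := isVote_swf sc htb (P ++ PM)
    obtain ⟨hi1, hi2⟩ := rcIndex_bounds hptm hpo hRC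
    have hfail_i := hfail _ hi1 hi2
    unfold RC at hRC
    set i := rcIndex (swf sc tb (P ++ PM)) po with hi
    clear_value i
    set T := topSet (swf sc tb (P ++ PM)) i with hT
    have hp : p ∈ T ∩ topSet po i := by simp [hRC]
    have hpT := (Finset.mem_inter.1 hp).1
    have hcH := card_Hset (isVote_swf sc htb P).1 hpo hi1 hi2 (Finset.mem_inter.1 hp).2
    set H := Hset (swf sc tb P) po p i with hH
    have hpH : p ∈ H := Finset.mem_insert_self _ _
    have hsepT : ∀ t ∈ T, ∀ d ∉ T, RankedBelow sc tb (P ++ PM) d t := by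
      intro t ht d hd
      rw [← swf_lt_iff htb]
      simp only [hT, topSet, Finset.mem_filter, Finset.mem_univ, true_and] at ht hd
      omega
    obtain ⟨PM', hlen', hvotes', hsep⟩ := exists_separating_of_exchange (H := H) _ T rfl
      (by rw [hcH, card_topSet hptm (by omega)])
      (by
        intro h hh t ht
        obtain ⟨hhH, hhT⟩ := Finset.mem_sdiff.1 hh
        obtain ⟨htT, htH⟩ := Finset.mem_sdiff.1 ht
        rw [← swf_lt_iff htb]
        refine lt_of_mem_Hset hhH (fun e => hhT (e ▸ hpT)) htH fun htop => htH ?_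
        have : t ∈ T ∩ topSet po i := Finset.mem_inter.2 ⟨htT, htop⟩
        rw [hRC, Finset.mem_singleton] at this
        exact this ▸ hpH)
      ⟨PM, hlen, hvotes, hsepT⟩
    have hgreedy := stageProfile_separates hx2.le htb P H hlen' hvotes' hsep
    have hinj := (isVote_swf sc htb (P ++ stageProfile sc tb P H k)).1
    obtain ⟨u, hu, humin⟩ := Finset.exists_min_image (UsetAlg sc tb P po p i k)
      (stageSwfAlg sc tb P po p i k) (Uset_nonempty ⟨p, hpH⟩)
    obtain ⟨d, hd, hdmax⟩ := Finset.exists_max_image (DsetAlg sc tb P po p i k)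
      (stageSwfAlg sc tb P po p i k) (Dset_nonempty (by
        rw [← Finset.card_pos, Finset.card_univ_sdiff, hcH]
        omega))
    have hlt := hfail_i u hu d hd
      (fun v hv hne => lt_of_le_of_ne (humin v hv) fun e => hne (hinj e).symm)
      (fun v hv hne => lt_of_le_of_ne (hdmax v hv) fun e => hne (hinj e))
    exact lt_asymm hlt
      (swf_lt_of_rankedBelow (hgreedy u (Uset_subset hu) d (notMem_of_mem_Dset hd)))
  refine ⟨main, fun i _ _ hRC => main ⟨_, length_stageProfile _ _ _ _ _,
    isVote_of_mem_stageProfile _ htb _ _ _, hRC⟩⟩
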